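/- Define events as an inductive type Event with constructors issue (r : ℕ) and redeem (r : ℕ), and define validity of a trace relative to a pool S : Finset ℕ recursively by: Valid S [] holds; Valid S (issue r :: t) holds iff Valid (insert r S) t holds; Valid S (redeem r :: t) holds iff r ∈ S and Valid (S.erase r) t holds. Then for every trace t : List Event with Valid ∅ t and every token value r : ℕ, the number of occurrences of (redeem r) in t is at most the number of occurrences of (issue r) in t. -/

import Mathlib

/-!
The claim is generalized from the empty pool to an arbitrary pool `S`, so that it can be proved by
induction on the trace: the redemptions of `r` exceed its issuances by at most `1` if `r ∈ S`, and
by at most `0` otherwise (`Valid.count_redeem_le`). An issuance of `r` raises the issue count by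
one, which pays for `r` being in the new pool; a redemption of `r` uses up the membership `r ∈ S`;
events on other tokens change neither the counts nor the membership of `r`.
-/

/-- Events on the freshness-token pool. -/
inductive Event where
  | issue (r : ℕ) : Event
  | redeem (r : ℕ) : Event
deriving DecidableEq

/-- Validity of a trace relative to a pool `S` of outstanding freshness tokens:
issuance inserts the token, redemption requires membership and erases it. -/
def Valid : Finset ℕ → List Event → Prop
  | _, [] => True
  | S, (Event.issue r) :: t => Valid (insert r S) t
  | S, (Event.redeem r) :: t => r ∈ S ∧ Valid (S.erase r) t

/-- The invariant behind the soundness statement: from an arbitrary pool `S`, a token already in `S`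
grants at most one redemption beyond those covered by issuances. -/
theorem Valid.count_redeem_le (r : ℕ) (t : List Event) : ∀ S : Finset ℕ, Valid S t →
    t.count (Event.redeem r) ≤ t.count (Event.issue r) + if r ∈ S then 1 else 0 := by
  induction t with
  | nil => intro S _; simp
  | cons e t ih =>
    intro S h
    cases e with
    | issue a =>
      have := ih _ h
      by_cases ha : a = r
      · subst ha
        simp at this ⊢
        omega
      · simpa [List.count_cons, ha, Ne.symm ha] using this
    | redeem a =>
      have := ih _ h.2
      by_cases ha : a = r
      · subst ha
        simp [h.1] at this ⊢
        omega
      · simpa [List.count_cons, ha, Ne.symm ha] using this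

/-- Freshness-pool soundness: starting from the empty pool, every token value is
redeemed at most as many times as it is issued. -/
theorem count_redeem_le_count_issue (t : List Event) (ht : Valid ∅ t) (r : ℕ) :
    t.count (Event.redeem r) ≤ t.count (Event.issue r) := by
  simpa using Valid.count_redeem_le r t ∅ ht
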